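/- arXiv:2004.12990 — 3 statements merged into one kernel-verified Lean document; each statement's English description precedes it below -/
import Mathlib

section
/- Let (A,w) be a balanced, possibly partial solution. Then: (i) for each voter n∈∪_{c∈A} N_c it holds that ∑_{c∈A∩C_n} w_{nc}=s_n; and (ii) for each voter n∈∪_{c∈A} N_c and each candidate c∈A∩C_n with w_{nc}>0, it holds that supp_w(c)=min_{c'∈A∩C_n} supp_w(c'). -/
/-!
Both parts are exchange arguments that alter only the weights of a single voter `n`. Replacing
the row of `n` by `u` changes the support of each candidate `x` by exactly `u x - w n x`
(`supp_update`), and keeps feasibility as long as `u` is nonnegative, vanishes off the edges at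
`n`, and has total at most `s n` (`feasible_update`).

For (i), withdraw all weight of `n` from candidates outside `A` and give everything left over to
some approved member of `A`: the total support of `A` rises by
`s n - ∑ c ∈ A ∩ approves edge n, w n c`, so maximality forces this quantity to vanish.

For (ii), if `w n c > 0` and some `c' ∈ A` approved by `n` has smaller support than `c`, move a
weight `ε > 0` with `ε ≤ w n c` and `ε < supp c - supp c'` from `c` to `c'`. The total support is
unchanged, while the sum of squares changes by `2 * ε * (supp c' - supp c + ε) < 0`,
contradicting minimality.
-/


open Finset

section Defs

variable {V Cand : Type*} [Fintype V] [Fintype Cand] [DecidableEq V] [DecidableEq Cand]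

/-- The set `C_n` of candidates approved by voter `n`. -/
def approves (edge : V → Cand → Prop) [∀ n c, Decidable (edge n c)] (n : V) : Finset Cand :=
  Finset.univ.filter (fun c => edge n c)

/-- The set `N_c` of voters approving candidate `c`. -/
def approvers (edge : V → Cand → Prop) [∀ n c, Decidable (edge n c)] (c : Cand) : Finset V :=
  Finset.univ.filter (fun n => edge n c)

/-- Feasibility of an edge-weight vector: nonnegative, supported on the edges of the
approval graph, and the total weight assigned by each voter is at most her vote strength. -/
def Feasible (edge : V → Cand → Prop) [∀ n c, Decidable (edge n c)]
    (s : V → ℝ) (w : V → Cand → ℝ) : Prop :=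
  (∀ n c, 0 ≤ w n c) ∧ (∀ n c, ¬ edge n c → w n c = 0) ∧
    ∀ n, ∑ c ∈ approves edge n, w n c ≤ s n

/-- The support `supp_w(c)` of a candidate. -/
noncomputable def supp (edge : V → Cand → Prop) [∀ n c, Decidable (edge n c)]
    (w : V → Cand → ℝ) (c : Cand) : ℝ :=
  ∑ n ∈ approvers edge c, w n c

/-- `supp_w(A) = min_{c ∈ A} supp_w(c)`, valued in `EReal` with the convention
`supp_w(∅) = ∞`. -/
noncomputable def suppMin (edge : V → Cand → Prop) [∀ n c, Decidable (edge n c)]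
    (w : V → Cand → ℝ) (A : Finset Cand) : EReal :=
  A.inf (fun c => (supp edge w c : EReal))

/-- `w` is balanced for `A`: among feasible vectors it maximizes the sum of member supports
and, subject to that, minimizes the sum of squared member supports. -/
def BalancedWeight (edge : V → Cand → Prop) [∀ n c, Decidable (edge n c)] (s : V → ℝ)
    (A : Finset Cand) (w : V → Cand → ℝ) : Prop :=
  Feasible edge s w ∧
  (∀ w', Feasible edge s w' → ∑ c ∈ A, supp edge w' c ≤ ∑ c ∈ A, supp edge w c) ∧
  (∀ w', Feasible edge s w' → ∑ c ∈ A, supp edge w' c = ∑ c ∈ A, supp edge w c →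
    ∑ c ∈ A, (supp edge w c) ^ 2 ≤ ∑ c ∈ A, (supp edge w' c) ^ 2)

/-- The slack of voter `n` at threshold `t`, relative to the solution `(A, w)`. -/
noncomputable def slack (edge : V → Cand → Prop) [∀ n c, Decidable (edge n c)] (s : V → ℝ)
    (A : Finset Cand) (w : V → Cand → ℝ) (n : V) (t : ℝ) : ℝ :=
  s n - ∑ c ∈ A ∩ approves edge n, w n c * min 1 (t / supp edge w c)

/-- The pre-score of an unelected candidate `c'` at threshold `t`. -/
noncomputable def prescore (edge : V → Cand → Prop) [∀ n c, Decidable (edge n c)] (s : V → ℝ)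
    (A : Finset Cand) (w : V → Cand → ℝ) (c' : Cand) (t : ℝ) : ℝ :=
  ∑ n ∈ approvers edge c', slack edge s A w n t

/-- `score(c') = max { t ≥ 0 : prescore(c', t) ≥ t }`. -/
noncomputable def score (edge : V → Cand → Prop) [∀ n c, Decidable (edge n c)] (s : V → ℝ)
    (A : Finset Cand) (w : V → Cand → ℝ) (c' : Cand) : ℝ :=
  sSup {t : ℝ | 0 ≤ t ∧ t ≤ prescore edge s A w c' t}

/-- Proportional justified representation for a committee of target size `k`. -/
def PJR (edge : V → Cand → Prop) [∀ n c, Decidable (edge n c)] (s : V → ℝ)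
    (k : ℕ) (A : Finset Cand) : Prop :=
  ¬ ∃ (N' : Finset V) (r : ℕ), 0 < r ∧ r ≤ k ∧
      (r : ℝ) / k * ∑ n, s n ≤ ∑ n ∈ N', s n ∧
      r ≤ (N'.inf (approves edge)).card ∧
      (A ∩ N'.sup (approves edge)).card < r

/-- Parametric proportional justified representation (`t`-PJR). -/
def tPJR (edge : V → Cand → Prop) [∀ n c, Decidable (edge n c)] (s : V → ℝ)
    (A : Finset Cand) (t : ℝ) : Prop :=
  ¬ ∃ (N' : Finset V) (r : ℕ), 0 < r ∧ r ≤ A.card ∧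
      (r : ℝ) * t ≤ ∑ n ∈ N', s n ∧
      r ≤ (N'.inf (approves edge)).card ∧
      (A ∩ N'.sup (approves edge)).card < r

end Defs

section Exchange

variable {V Cand : Type*} [Fintype V] [Fintype Cand] [DecidableEq V] [DecidableEq Cand]

theorem feasible_update (edge : V → Cand → Prop) [∀ n c, Decidable (edge n c)]
    {s : V → ℝ} {w : V → Cand → ℝ} (hw : Feasible edge s w) (n : V) (u : Cand → ℝ)
    (h0 : ∀ c, 0 ≤ u c) (hE : ∀ c, ¬ edge n c → u c = 0)
    (hs : ∑ c ∈ approves edge n, u c ≤ s n) :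
    Feasible edge s (Function.update w n u) := by
  obtain ⟨h1, h2, h3⟩ := hw
  refine ⟨fun m c => ?_, fun m c hmc => ?_, fun m => ?_⟩ <;>
    rcases eq_or_ne m n with rfl | hm
  · simpa using h0 c
  · simpa [Function.update_of_ne hm] using h1 m c
  · simpa using hE c hmc
  · simpa [Function.update_of_ne hm] using h2 m c hmc
  · simpa using hs
  · simpa [Function.update_of_ne hm] using h3 m

theorem supp_update (edge : V → Cand → Prop) [∀ n c, Decidable (edge n c)]
    {w : V → Cand → ℝ} (hw : ∀ n c, ¬ edge n c → w n c = 0) (n : V) (u : Cand → ℝ)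
    (hE : ∀ c, ¬ edge n c → u c = 0) (x : Cand) :
    supp edge (Function.update w n u) x = supp edge w x + (u x - w n x) := by
  -- Off-edge weights vanish, so supports may be summed over all voters.
  have key : ∀ v : V → Cand → ℝ, (∀ m c, ¬ edge m c → v m c = 0) →
      supp edge v x = ∑ m, v m x := by
    intro v hv
    unfold supp approvers
    rw [Finset.sum_filter]
    refine Finset.sum_congr rfl fun m _ => ?_
    split_ifs with h
    · rfl
    · exact (hv m x h).symm
  rw [key w hw, key]
  · rw [← sub_eq_iff_eq_add', ← Finset.sum_sub_distrib, Finset.sum_eq_single n]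
    · simp
    · intro m _ hm
      simp [Function.update_of_ne hm]
    · simp
  · intro m c hmc
    rcases eq_or_ne m n with rfl | hm
    · simpa using hE c hmc
    · simpa [Function.update_of_ne hm] using hw m c hmc

end Exchange

theorem balanced_full_distribution_and_min_support
    {V Cand : Type*} [Fintype V] [Fintype Cand] [DecidableEq V] [DecidableEq Cand]
    (edge : V → Cand → Prop) [∀ n c, Decidable (edge n c)]
    (s : V → ℝ) (hs : ∀ n, 0 ≤ s n)
    (A : Finset Cand) (w : V → Cand → ℝ)
    (hbal : BalancedWeight edge s A w) :
    (∀ n : V, (∃ c ∈ A, edge n c) → ∑ c ∈ A ∩ approves edge n, w n c = s n) ∧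
    (∀ (n : V) (c : Cand) (hc : c ∈ A ∩ approves edge n), 0 < w n c →
      supp edge w c = (A ∩ approves edge n).inf' ⟨c, hc⟩ (supp edge w)) := by
  obtain ⟨hfeas, hmax, hmin⟩ := hbal
  obtain ⟨hw0, hwE, hws⟩ := id hfeas
  refine ⟨?_, ?_⟩
  · rintro n ⟨c₀, hc₀, he₀⟩
    have hmem : c₀ ∈ A ∩ approves edge n := by simp [approves, hc₀, he₀]
    have hle : ∑ c ∈ A ∩ approves edge n, w n c ≤ s n :=
      (Finset.sum_le_sum_of_subset_of_nonneg Finset.inter_subset_right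
        fun c _ _ => hw0 n c).trans (hws n)
    obtain ⟨δ, hδ⟩ : ∃ δ, δ = s n - ∑ c ∈ A ∩ approves edge n, w n c := ⟨_, rfl⟩
    have hδ0 : 0 ≤ δ := by linarith
    let u : Cand → ℝ := fun c => if c ∈ A then w n c + (if c = c₀ then δ else 0) else 0
    have hu0 : ∀ c, 0 ≤ u c := by
      intro c
      have := hw0 n c
      simp only [u]
      split_ifs <;> linarith
    have huE : ∀ c, ¬ edge n c → u c = 0 := by
      intro c hc
      have hne : c ≠ c₀ := by rintro rfl; exact hc he₀
      simp [u, hne, hwE n c hc]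
    have hus : ∑ c ∈ approves edge n, u c ≤ s n := by
      simp only [u]
      rw [← Finset.sum_filter, Finset.filter_mem_eq_inter, Finset.inter_comm,
        Finset.sum_add_distrib, Finset.sum_ite_eq', if_pos hmem]
      linarith
    have h := hmax _ (feasible_update edge hfeas n u hu0 huE hus)
    simp only [supp_update edge hwE n u huE] at h
    have hdiff : ∑ c ∈ A, (u c - w n c) = δ := by
      rw [Finset.sum_congr rfl (g := fun c => if c = c₀ then δ else 0)
        (fun c hc => by simp [u, hc]), Finset.sum_ite_eq', if_pos hc₀]
    rw [Finset.sum_add_distrib, hdiff] at h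
    linarith
  · intro n c hc hpos
    refine le_antisymm (Finset.le_inf' _ _ fun c' hc' => ?_) (Finset.inf'_le _ hc)
    by_contra! hlt
    have hne : c' ≠ c := by rintro rfl; exact lt_irrefl _ hlt
    obtain ⟨hcA, hcn⟩ := Finset.mem_inter.1 hc
    obtain ⟨hc'A, hc'n⟩ := Finset.mem_inter.1 hc'
    have he : edge n c := by simpa [approves] using hcn
    have he' : edge n c' := by simpa [approves] using hc'n
    obtain ⟨ε, hε0, hεw, hεd⟩ : ∃ ε, 0 < ε ∧ ε ≤ w n c ∧ ε < supp edge w c - supp edge w c' := by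
      refine ⟨min (w n c) ((supp edge w c - supp edge w c') / 2), lt_min hpos (by linarith),
        min_le_left _ _, (min_le_right _ _).trans_lt (by linarith)⟩
    let d : Cand → ℝ := fun x => (if x = c' then ε else 0) - (if x = c then ε else 0)
    let u : Cand → ℝ := fun x => w n x + d x
    have hu0 : ∀ x, 0 ≤ u x := by
      intro x
      have := hw0 n x
      simp only [u, d]
      split_ifs with h1 h2 h2
      · linarith
      · linarith
      · subst h2; linarith
      · linarith
    have huE : ∀ x, ¬ edge n x → u x = 0 := by
      intro x hx
      have h1 : x ≠ c := by rintro rfl; exact hx he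
      have h2 : x ≠ c' := by rintro rfl; exact hx he'
      simp [u, d, h1, h2, hwE n x hx]
    have hd : ∀ S : Finset Cand, c ∈ S → c' ∈ S → ∑ x ∈ S, d x = 0 := by
      intro S h1 h2
      simp [d, Finset.sum_sub_distrib, h1, h2]
    have hus : ∑ x ∈ approves edge n, u x ≤ s n := by
      simp only [u]
      rw [Finset.sum_add_distrib, hd _ hcn hc'n, add_zero]
      exact hws n
    have hsupp : ∀ x, supp edge (Function.update w n u) x = supp edge w x + d x := by
      intro x
      rw [supp_update edge hwE n u huE]
      simp [u]
    have h := hmin _ (feasible_update edge hfeas n u hu0 huE hus) (by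
      simp only [hsupp]
      rw [Finset.sum_add_distrib, hd _ hcA hc'A, add_zero])
    simp only [hsupp] at h
    have hsq : ∀ x, (supp edge w x + d x) ^ 2 = supp edge w x ^ 2 +
        ((if x = c' then 2 * ε * supp edge w c' + ε ^ 2 else 0) +
          (if x = c then - (2 * ε * supp edge w c) + ε ^ 2 else 0)) := by
      intro x
      simp only [d]
      split_ifs with h1 h2 h2
      · exact absurd (h1.symm.trans h2) hne
      · subst h1; ring
      · subst h2; ring
      · ring
    simp only [hsq] at h
    rw [Finset.sum_add_distrib, Finset.sum_add_distrib, Finset.sum_ite_eq', Finset.sum_ite_eq',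
      if_pos hc'A, if_pos hcA] at h
    nlinarith [mul_pos hε0 (sub_pos.2 hεd)]
end

section
/- Let (A,w) be a feasible partial solution with w_{nc}=0 for every edge nc with c∉A, let c'∈C∖A and t≥0. Define w'∈ℝ^E by: for each voter n∈N_{c'} and each c∈A∩C_n, w'_{nc}=w_{nc}·min{1, t/supp_w(c)}; for each n∈N_{c'}, w'_{nc'}=s_n − ∑_{c∈A∩C_n} w'_{nc}; and w'_e=w_e on all other edges. Then (A+c',w') is feasible, supp_{w'}(c')=prescore_{(A,w)}(c',t), and supp_{w'}(c) ≥ min{supp_w(c), t} for every c∈A. In particular, if prescore_{(A,w)}(c',t) ≥ t then supp_{w'}(A+c') ≥ min{supp_w(A), t}. -/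
/-!
Voters approving `c'` only ever scale their old weights down by a factor in `[0, 1]`, so what they
free up is nonnegative and handing all of it to `c'` makes each of them spend exactly `s n`.
Since every voter keeps at least the fraction `min 1 (t / supp c)` of her weight on `c ∈ A`, the
new support of `c` is at least `supp c * min 1 (t / supp c)`, which is `min (supp c) t` when
`supp c > 0`. The bound on the minimum support of `A + c'` then holds candidate by candidate.
-/

open Finset

/-- The weight vector produced by `Insert(A, w, c', t)`: every voter `n` approving `c'`
scales down her weight on each `c ∈ A ∩ C_n` by `min{1, t/supp_w(c)}` and redirects the
difference (her slack) to `c'`; all other edge weights are unchanged. -/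
noncomputable def insertW {V Cand : Type*} [Fintype V] [Fintype Cand]
    [DecidableEq V] [DecidableEq Cand]
    (edge : V → Cand → Prop) [∀ n c, Decidable (edge n c)]
    (s : V → ℝ) (A : Finset Cand) (w : V → Cand → ℝ) (c' : Cand) (t : ℝ) :
    V → Cand → ℝ := fun n c =>
  if edge n c' then
    (if c = c' then s n - ∑ d ∈ A ∩ approves edge n, w n d * min 1 (t / supp edge w d)
     else if c ∈ A then w n c * min 1 (t / supp edge w c)
     else w n c)
  else w n c

theorem scale_nonneg {x t : ℝ} (hx : 0 ≤ x) (ht : 0 ≤ t) : 0 ≤ min 1 (t / x) :=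
  le_min zero_le_one (div_nonneg ht hx)

/-- At `x = 0` the right-hand side is `0` whatever the junk value of `t / 0`, and so is an upper
bound for the left-hand side. -/
theorem min_le_mul_scale {x t : ℝ} (hx : 0 ≤ x) : min x t ≤ x * min 1 (t / x) := by
  rcases hx.eq_or_lt with rfl | h
  · simp
  · rw [mul_min_of_nonneg _ _ hx, mul_one, mul_div_cancel₀ _ h.ne']

section

variable {V Cand : Type*} [Fintype V] [Fintype Cand] [DecidableEq V] [DecidableEq Cand]
  {edge : V → Cand → Prop} [∀ n c, Decidable (edge n c)] {s : V → ℝ} {w : V → Cand → ℝ}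

theorem supp_nonneg (hw : Feasible edge s w) (c : Cand) : 0 ≤ supp edge w c :=
  Finset.sum_nonneg fun n _ => hw.1 n c

theorem slack_nonneg (hw : Feasible edge s w) (A : Finset Cand) (n : V) (t : ℝ) :
    0 ≤ slack edge s A w n t := by
  refine sub_nonneg.2 (le_trans ?_ (hw.2.2 n))
  calc ∑ c ∈ A ∩ approves edge n, w n c * min 1 (t / supp edge w c)
      ≤ ∑ c ∈ A ∩ approves edge n, w n c :=
        Finset.sum_le_sum fun c _ => mul_le_of_le_one_right (hw.1 n c) (min_le_left _ _)
    _ ≤ ∑ c ∈ approves edge n, w n c :=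
        Finset.sum_le_sum_of_subset_of_nonneg Finset.inter_subset_right fun c _ _ => hw.1 n c

theorem insertW_of_not_edge {A : Finset Cand} {c' : Cand} {t : ℝ} {n : V} (h : ¬ edge n c')
    (c : Cand) : insertW edge s A w c' t n c = w n c := by
  simp [insertW, h]

theorem insertW_self {A : Finset Cand} {c' : Cand} {t : ℝ} {n : V} (h : edge n c') :
    insertW edge s A w c' t n c' = slack edge s A w n t := by
  simp [insertW, slack, h]

theorem insertW_of_mem {A : Finset Cand} {c' : Cand} {t : ℝ} {n : V} (h : edge n c')
    (hc' : c' ∉ A) {c : Cand} (hc : c ∈ A) :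
    insertW edge s A w c' t n c = w n c * min 1 (t / supp edge w c) := by
  have : c ≠ c' := fun e => hc' (e ▸ hc)
  simp [insertW, h, this, hc]

theorem insertW_of_notMem {A : Finset Cand} {c' : Cand} {t : ℝ} {n : V} {c : Cand}
    (hcc : c ≠ c') (hc : c ∉ A) : insertW edge s A w c' t n c = w n c := by
  simp [insertW, hcc, hc]

/-- A voter approving `c'` spends exactly her vote strength after the insertion. -/
theorem sum_insertW {A : Finset Cand} (hwA : ∀ n c, c ∉ A → w n c = 0) {c' : Cand}
    (hc' : c' ∉ A) {t : ℝ} {n : V} (h : edge n c') :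
    ∑ c ∈ approves edge n, insertW edge s A w c' t n c = s n := by
  have hsub : insert c' (A ∩ approves edge n) ⊆ approves edge n :=
    Finset.insert_subset (by simp [approves, h]) Finset.inter_subset_right
  rw [← Finset.sum_subset hsub, Finset.sum_insert (by simp [hc']), insertW_self h,
    Finset.sum_congr rfl fun c hc => insertW_of_mem h hc' (Finset.mem_inter.1 hc).1, slack,
    sub_add_cancel]
  intro c hc hcn
  have hcc : c ≠ c' := fun e => hcn (by simp [e])
  have hcA : c ∉ A := fun hA => hcn (by simp [hA, hc])
  rw [insertW_of_notMem hcc hcA, hwA n c hcA]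

theorem feasible_insertW (hw : Feasible edge s w) {A : Finset Cand}
    (hwA : ∀ n c, c ∉ A → w n c = 0) {c' : Cand} (hc' : c' ∉ A) {t : ℝ} (ht : 0 ≤ t) :
    Feasible edge s (insertW edge s A w c' t) := by
  refine ⟨fun n c => ?_, fun n c hnc => ?_, fun n => ?_⟩
  · by_cases h : edge n c'
    · by_cases hcc : c = c'
      · rw [hcc, insertW_self h]
        exact slack_nonneg hw A n t
      · by_cases hc : c ∈ A
        · rw [insertW_of_mem h hc' hc]
          exact mul_nonneg (hw.1 n c) (scale_nonneg (supp_nonneg hw c) ht)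
        · rw [insertW_of_notMem hcc hc]
          exact hw.1 n c
    · rw [insertW_of_not_edge h]
      exact hw.1 n c
  · by_cases h : edge n c'
    · have hcc : c ≠ c' := fun e => hnc (e ▸ h)
      by_cases hc : c ∈ A
      · rw [insertW_of_mem h hc' hc, hw.2.1 n c hnc, zero_mul]
      · rw [insertW_of_notMem hcc hc, hw.2.1 n c hnc]
    · rw [insertW_of_not_edge h, hw.2.1 n c hnc]
  · by_cases h : edge n c'
    · exact (sum_insertW hwA hc' h).le
    · simpa only [insertW_of_not_edge h] using hw.2.2 n

theorem supp_insertW_self (A : Finset Cand) (c' : Cand) (t : ℝ) :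
    supp edge (insertW edge s A w c' t) c' = prescore edge s A w c' t :=
  Finset.sum_congr rfl fun _ hn => insertW_self (Finset.mem_filter.1 hn).2

theorem min_supp_le_supp_insertW (hw : Feasible edge s w) {A : Finset Cand} {c' : Cand}
    (hc' : c' ∉ A) (t : ℝ) {c : Cand} (hc : c ∈ A) :
    min (supp edge w c) t ≤ supp edge (insertW edge s A w c' t) c := by
  refine (min_le_mul_scale (supp_nonneg hw c)).trans ?_
  conv_lhs => enter [1]; unfold supp
  rw [Finset.sum_mul]
  refine Finset.sum_le_sum fun n _ => ?_
  by_cases h : edge n c'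
  · rw [insertW_of_mem h hc' hc]
  · rw [insertW_of_not_edge h]
    exact mul_le_of_le_one_right (hw.1 n c) (min_le_left _ _)

end

theorem insert_properties
    {V Cand : Type*} [Fintype V] [Fintype Cand] [DecidableEq V] [DecidableEq Cand]
    (edge : V → Cand → Prop) [∀ n c, Decidable (edge n c)]
    (s : V → ℝ) (hs : ∀ n, 0 ≤ s n)
    (A : Finset Cand) (w : V → Cand → ℝ) (hw : Feasible edge s w)
    (hwA : ∀ n c, c ∉ A → w n c = 0)
    (c' : Cand) (hc' : c' ∉ A) (t : ℝ) (ht : 0 ≤ t) :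
    Feasible edge s (insertW edge s A w c' t) ∧
    supp edge (insertW edge s A w c' t) c' = prescore edge s A w c' t ∧
    (∀ c ∈ A, min (supp edge w c) t ≤ supp edge (insertW edge s A w c' t) c) ∧
    (t ≤ prescore edge s A w c' t →
      min (suppMin edge w A) ((t : ℝ) : EReal) ≤
        suppMin edge (insertW edge s A w c' t) (insert c' A)) := by
  refine ⟨feasible_insertW hw hwA hc' ht, supp_insertW_self A c' t,
    fun c hc => min_supp_le_supp_insertW hw hc' t hc, fun hpre => ?_⟩
  refine Finset.le_inf fun c hc => ?_
  rcases Finset.mem_insert.1 hc with rfl | hcA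
  · rw [supp_insertW_self]
    exact (min_le_right _ _).trans (EReal.coe_le_coe_iff.2 hpre)
  · calc min (suppMin edge w A) (t : EReal)
        ≤ min (supp edge w c : EReal) (t : EReal) :=
          min_le_min_right _ (Finset.inf_le hcA)
      _ = ((min (supp edge w c) t : ℝ) : EReal) := (EReal.coe_strictMono.monotone.map_min).symm
      _ ≤ _ := EReal.coe_le_coe_iff.2 (min_supp_le_supp_insertW hw hc' t hcA)
end

section
/- If (A,w) and (A',w') are two balanced partial solutions with A⊆A', then supp_w(c) ≥ supp_{w'}(c) for every candidate c∈A. Furthermore, for every candidate c'∈C∖A' we have score_{(A,w)}(c') ≥ score_{(A',w')}(c'). -/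
/-!
A balanced weight vector `w` for `A` has a simple structure at each voter `n`. Maximality of the
total support says that a voter approving some member of `A` spends all of `s n` on `A`
(`BalancedWeight.sum_eq`). Minimality of the sum of squares says that she spends only on
least-supported members among those she approves (`BalancedWeight.supp_le`), since otherwise
moving a little weight from the better to the worse supported member lowers the sum of squares.

Supports: let `D` be the set of members of `A` whose support is strictly larger under `w'`, and
suppose `D` is nonempty. Then some voter gives more to `D` under `w'` than under `w`, hence less to
`A \ D` under `w'` than under `w`, as she spends everything on `A` under `w`. So there are
`c ∈ D` and `d ∈ A \ D` with `w' n c > 0` and `w n d > 0`, and the local property gives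
`supp w' c ≤ supp w' d ≤ supp w d ≤ supp w c`, contradicting `c ∈ D`.

Scores: a candidate receiving weight from `n` under `w'` has a `w'`-support at most the `w`-support
of any candidate receiving weight from `n` under `w`. So a voter's slack at each threshold
`t ≥ 0` is at most as large for `(A', w')` as for `(A, w)`; prescores compare
accordingly, and then so do scores.
-/

open Finset

section Helpers

variable {V Cand : Type*} [Fintype V] [Fintype Cand] [DecidableEq V] [DecidableEq Cand]
  {edge : V → Cand → Prop} [∀ n c, Decidable (edge n c)] {s : V → ℝ}
  {A A' : Finset Cand} {w w' : V → Cand → ℝ}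

/-! ### Sums of feasible weights -/

lemma supp_eq_sum (h : ∀ n c, ¬ edge n c → w n c = 0) (c : Cand) :
    supp edge w c = ∑ n, w n c := by
  unfold supp approvers
  refine Finset.sum_subset (Finset.subset_univ _) fun n _ hn => h n c ?_
  simpa using hn

lemma Feasible.sum_univ_le (h : Feasible edge s w) (n : V) : ∑ c, w n c ≤ s n := by
  refine le_trans (le_of_eq ?_) (h.2.2 n)
  symm
  unfold approves
  refine Finset.sum_subset (Finset.subset_univ _) fun c _ hc => h.2.1 n c ?_
  simpa using hc

lemma Feasible.sum_le (h : Feasible edge s w) (n : V) (A : Finset Cand) :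
    ∑ c ∈ A, w n c ≤ s n :=
  (Finset.sum_le_sum_of_subset_of_nonneg (Finset.subset_univ _) fun c _ _ => h.1 n c).trans
    (h.sum_univ_le n)

lemma feasible_of (h0 : ∀ n c, 0 ≤ w n c) (h1 : ∀ n c, ¬ edge n c → w n c = 0)
    (h2 : ∀ n, ∑ c, w n c ≤ s n) : Feasible edge s w :=
  ⟨h0, h1, fun n =>
    (Finset.sum_le_sum_of_subset_of_nonneg (Finset.subset_univ _) fun c _ _ => h0 n c).trans
      (h2 n)⟩

lemma sum_supp (h : ∀ n c, ¬ edge n c → w n c = 0) (A : Finset Cand) :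
    ∑ c ∈ A, supp edge w c = ∑ n, ∑ c ∈ A, w n c := by
  simp_rw [supp_eq_sum h]
  exact Finset.sum_comm

lemma Feasible.le_supp (h : Feasible edge s w) (n : V) (c : Cand) : w n c ≤ supp edge w c := by
  rw [supp_eq_sum h.2.1]
  exact Finset.single_le_sum (f := fun n => w n c) (fun m _ => h.1 m c) (Finset.mem_univ n)

/-! ### Local structure of balanced weights -/

/-- Maximality of the total support: a voter approving some member of the committee spends all
of her vote strength on it. -/
lemma BalancedWeight.sum_eq (h : BalancedWeight edge s A w) {n : V} {c : Cand} (hc : c ∈ A)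
    (hn : edge n c) (hs : 0 ≤ s n) : ∑ d ∈ A, w n d = s n := by
  obtain ⟨hf, hmax, -⟩ := h
  refine le_antisymm (hf.sum_le n A) ?_
  -- Compare with the weights in which `n` gives everything to `c`.
  set w2 : V → Cand → ℝ := fun m d => if m = n then (if d = c then s n else 0) else w m d with hw2
  have hf2 : Feasible edge s w2 := by
    refine feasible_of ?_ ?_ ?_
    · intro m d
      simp only [hw2]
      split_ifs
      exacts [hs, le_rfl, hf.1 m d]
    · intro m d hmd
      simp only [hw2]
      split_ifs with h1 h2
      · subst h1 h2; exact absurd hn hmd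
      · rfl
      · exact hf.2.1 m d hmd
    · intro m
      by_cases hm : m = n
      · simp [hw2, hm]
      · simpa [hw2, hm] using hf.sum_univ_le m
  have key := hmax w2 hf2
  rw [sum_supp hf.2.1, sum_supp hf2.2.1, ← Finset.add_sum_erase _ _ (Finset.mem_univ n),
    ← Finset.add_sum_erase _ _ (Finset.mem_univ n)] at key
  have e1 : ∑ d ∈ A, w2 n d = s n := by simp [hw2, hc]
  have e2 : ∑ m ∈ Finset.univ.erase n, ∑ d ∈ A, w2 m d
      = ∑ m ∈ Finset.univ.erase n, ∑ d ∈ A, w m d := by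
    refine Finset.sum_congr rfl fun m hm => ?_
    simp [hw2, Finset.ne_of_mem_erase hm]
  linarith

/-- Minimality of the sum of squares: a voter gives weight only to members of minimum support
among the members she approves. -/
lemma BalancedWeight.supp_le (h : BalancedWeight edge s A w) {n : V} {c d : Cand} (hc : c ∈ A)
    (hd : d ∈ A) (hnd : edge n d) (hpos : 0 < w n c) : supp edge w c ≤ supp edge w d := by
  obtain ⟨hf, -, hmin⟩ := h
  by_contra! hlt
  have hnc : edge n c := by
    by_contra hnc
    exact hpos.ne' (hf.2.1 n c hnc)
  have hcd : c ≠ d := by rintro rfl; exact lt_irrefl _ hlt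
  -- Half the difference of supports keeps the first-order decrease dominant.
  obtain ⟨ε, hε, hε1, hε2⟩ :
      ∃ ε : ℝ, 0 < ε ∧ ε ≤ w n c ∧ ε ≤ (supp edge w c - supp edge w d) / 2 :=
    ⟨min (w n c) ((supp edge w c - supp edge w d) / 2), lt_min hpos (by linarith),
      min_le_left _ _, min_le_right _ _⟩
  set w2 : V → Cand → ℝ := fun m e =>
    w m e + if m = n then (if e = d then ε else 0) - (if e = c then ε else 0) else 0 with hw2
  have hf2 : Feasible edge s w2 := by
    refine feasible_of ?_ ?_ ?_
    · intro m e
      have := hf.1 m e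
      simp only [hw2]
      split_ifs with h1 h2 h3 h3
      · linarith
      · linarith
      · subst h1 h3; linarith
      · linarith
      · linarith
    · intro m e hme
      have := hf.2.1 m e hme
      simp only [hw2]
      split_ifs with h1 h2 h3 h3
      · subst h1 h2; exact absurd hnd hme
      · subst h1 h2; exact absurd hnd hme
      · subst h1 h3; exact absurd hnc hme
      · simpa using this
      · simpa using this
    · intro m
      have := hf.sum_univ_le m
      by_cases hm : m = n
      · subst hm
        simpa [hw2, Finset.sum_add_distrib] using this
      · simpa [hw2, hm] using this
  have hsupp : ∀ e, supp edge w2 e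
      = supp edge w e + ((if e = d then ε else 0) - (if e = c then ε else 0)) := by
    intro e
    rw [supp_eq_sum hf.2.1, supp_eq_sum hf2.2.1]
    simp [hw2, Finset.sum_add_distrib]
  have hsum : ∑ e ∈ A, supp edge w2 e = ∑ e ∈ A, supp edge w e := by
    simp [hsupp, Finset.sum_add_distrib, hc, hd]
  have key := hmin w2 hf2 hsum
  have hsq : ∑ e ∈ A, supp edge w2 e ^ 2 = ∑ e ∈ A, (supp edge w e ^ 2 +
      ((if e = d then 2 * ε * supp edge w e + ε ^ 2 else 0)
        + (if e = c then - (2 * ε * supp edge w e) + ε ^ 2 else 0))) := by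
    refine Finset.sum_congr rfl fun e _ => ?_
    rw [hsupp]
    split_ifs with h1 h2 h2
    · exact absurd (h2.symm.trans h1) hcd
    all_goals ring
  rw [hsq, Finset.sum_add_distrib, Finset.sum_add_distrib, Finset.sum_ite_eq' A d,
    Finset.sum_ite_eq' A c, if_pos hc, if_pos hd] at key
  nlinarith

/-! ### Monotonicity of supports -/

lemma supp_mono (hs : ∀ n, 0 ≤ s n) (h : BalancedWeight edge s A w)
    (h' : BalancedWeight edge s A' w') (hsub : A ⊆ A') {c₀ : Cand} (hc₀ : c₀ ∈ A) :
    supp edge w' c₀ ≤ supp edge w c₀ := by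
  by_contra! hlt
  have hf := h.1
  have hf' := h'.1
  set D := A.filter (fun c => supp edge w c < supp edge w' c) with hD
  have hDA : D ⊆ A := Finset.filter_subset _ _
  have h1 : ∑ c ∈ D, supp edge w c < ∑ c ∈ D, supp edge w' c :=
    Finset.sum_lt_sum_of_nonempty ⟨c₀, by simp [hD, hc₀, hlt]⟩
      fun c hc => (Finset.mem_filter.1 hc).2
  rw [sum_supp hf.2.1, sum_supp hf'.2.1] at h1
  obtain ⟨n, -, hn⟩ := Finset.exists_lt_of_sum_lt h1
  obtain ⟨c, hcD, hc⟩ := Finset.exists_lt_of_sum_lt hn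
  have hcpos : 0 < w' n c := (hf.1 n c).trans_lt hc
  have hnc : edge n c := by
    by_contra hnc
    exact hcpos.ne' (hf'.2.1 n c hnc)
  have e1 := h.sum_eq (hDA hcD) hnc (hs n)
  have e2 := hf'.sum_le n A
  rw [← Finset.sum_sdiff hDA] at e1 e2
  have h2 : ∑ d ∈ A \ D, w' n d < ∑ d ∈ A \ D, w n d := by linarith
  obtain ⟨d, hdD, hd⟩ := Finset.exists_lt_of_sum_lt h2
  have hdpos : 0 < w n d := (hf'.1 n d).trans_lt hd
  have hnd : edge n d := by
    by_contra hnd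
    exact hdpos.ne' (hf.2.1 n d hnd)
  obtain ⟨hdA, hdD⟩ := Finset.mem_sdiff.1 hdD
  have h3 : supp edge w' d ≤ supp edge w d := by
    by_contra! h3
    exact hdD (Finset.mem_filter.2 ⟨hdA, h3⟩)
  have h4 := h'.supp_le (hsub (hDA hcD)) (hsub hdA) hnd hcpos
  have h5 := h.supp_le hdA (hDA hcD) hnc hdpos
  have h6 := (Finset.mem_filter.1 hcD).2
  linarith

/-! ### Monotonicity of slacks and scores -/

lemma slack_eq (hf : Feasible edge s w) (n : V) (t : ℝ) :
    slack edge s A w n t = s n - ∑ c ∈ A, w n c * min 1 (t / supp edge w c) := by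
  unfold slack
  congr 1
  refine Finset.sum_subset Finset.inter_subset_left fun c hc hcn => ?_
  rw [hf.2.1 n c, zero_mul]
  intro hnc
  exact hcn (Finset.mem_inter.2 ⟨hc, by simpa [approves] using hnc⟩)

lemma Feasible.term_nonneg (hf : Feasible edge s w) (n : V) (c : Cand) {t : ℝ} (ht : 0 ≤ t) :
    0 ≤ w n c * min 1 (t / supp edge w c) :=
  mul_nonneg (hf.1 n c) (le_min zero_le_one (div_nonneg ht ((hf.1 n c).trans (hf.le_supp n c))))

lemma slack_mono (hs : ∀ n, 0 ≤ s n) (h : BalancedWeight edge s A w)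
    (h' : BalancedWeight edge s A' w') (hsub : A ⊆ A') (n : V) {t : ℝ} (ht : 0 ≤ t) :
    slack edge s A' w' n t ≤ slack edge s A w n t := by
  have hf := h.1
  have hf' := h'.1
  rw [slack_eq hf, slack_eq hf']
  refine sub_le_sub_left ?_ _
  have hR : 0 ≤ ∑ c ∈ A', w' n c * min 1 (t / supp edge w' c) :=
    Finset.sum_nonneg fun c _ => hf'.term_nonneg n c ht
  by_cases hex : ∃ c ∈ A, 0 < w n c
  swap
  · push Not at hex
    rwa [Finset.sum_eq_zero]
    intro c hc
    rw [le_antisymm (hex c hc) (hf.1 n c), zero_mul]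
  obtain ⟨c, hc, hpos⟩ := hex
  have hnc : edge n c := by
    by_contra hnc
    exact hpos.ne' (hf.2.1 n c hnc)
  have e1 := h.sum_eq hc hnc (hs n)
  have e2 := h'.sum_eq (hsub hc) hnc (hs n)
  have hsn : 0 < s n := by
    rw [← e1]
    exact Finset.sum_pos' (fun c _ => hf.1 n c) ⟨c, hc, hpos⟩
  -- Both totals equal `s n`, so `s n` times either sum is a double sum over pairs of candidates.
  refine le_of_mul_le_mul_left ?_ hsn
  calc s n * ∑ c ∈ A, w n c * min 1 (t / supp edge w c)
      = ∑ c' ∈ A', ∑ c ∈ A, w' n c' * (w n c * min 1 (t / supp edge w c)) := by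
        rw [← e2, Finset.sum_mul_sum]
    _ ≤ ∑ c' ∈ A', ∑ c ∈ A, (w' n c' * min 1 (t / supp edge w' c')) * w n c := by
        refine Finset.sum_le_sum fun c' hc' => Finset.sum_le_sum fun c hc => ?_
        rcases (hf.1 n c).eq_or_lt with h0 | h0
        · simp [← h0]
        rcases (hf'.1 n c').eq_or_lt with h0' | h0'
        · simp [← h0']
        have hnc : edge n c := by
          by_contra hnc
          exact h0.ne' (hf.2.1 n c hnc)
        have hle : supp edge w' c' ≤ supp edge w c :=
          (h'.supp_le hc' (hsub hc) hnc h0').trans (supp_mono hs h h' hsub hc)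
        have hp : 0 < supp edge w' c' := h0'.trans_le (hf'.le_supp n c')
        have hm : min 1 (t / supp edge w c) ≤ min 1 (t / supp edge w' c') :=
          min_le_min le_rfl (div_le_div_of_nonneg_left ht hp hle)
        have := mul_le_mul_of_nonneg_left hm (mul_pos h0' h0).le
        linarith
    _ = s n * ∑ c' ∈ A', w' n c' * min 1 (t / supp edge w' c') := by
        rw [← e1, ← Finset.sum_mul_sum, mul_comm]

lemma score_mono (hs : ∀ n, 0 ≤ s n) (h : BalancedWeight edge s A w)
    (h' : BalancedWeight edge s A' w') (hsub : A ⊆ A') (c' : Cand) :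
    score edge s A' w' c' ≤ score edge s A w c' := by
  refine csSup_le_csSup ?_ ?_ ?_
  · refine ⟨∑ n ∈ approvers edge c', s n, ?_⟩
    rintro t ⟨ht, htp⟩
    refine htp.trans (Finset.sum_le_sum fun n _ => ?_)
    rw [slack_eq h.1]
    exact sub_le_self _ (Finset.sum_nonneg fun c _ => h.1.term_nonneg n c ht)
  · refine ⟨0, le_rfl, Finset.sum_nonneg fun n _ => ?_⟩
    simpa [slack] using hs n
  · rintro t ⟨ht, htp⟩
    exact ⟨ht, htp.trans (Finset.sum_le_sum fun n _ => slack_mono hs h h' hsub n ht)⟩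

end Helpers

theorem balanced_monotonicity_of_supports_and_scores
    {V Cand : Type*} [Fintype V] [Fintype Cand] [DecidableEq V] [DecidableEq Cand]
    (edge : V → Cand → Prop) [∀ n c, Decidable (edge n c)]
    (s : V → ℝ) (hs : ∀ n, 0 ≤ s n) (k : ℕ)
    (A A' : Finset Cand) (w w' : V → Cand → ℝ)
    (hbal : BalancedWeight edge s A w) (hbal' : BalancedWeight edge s A' w')
    (hAk : A.card ≤ k) (hA'k : A'.card ≤ k) (hsub : A ⊆ A') :
    (∀ c ∈ A, supp edge w' c ≤ supp edge w c) ∧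
    (∀ c' ∉ A', score edge s A' w' c' ≤ score edge s A w c') := by
  exact ⟨fun c hc => supp_mono hs hbal hbal' hsub hc,
    fun c' _ => score_mono hs hbal hbal' hsub c'⟩
end
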